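/- arXiv:2103.14510 — 2 statements merged into one kernel-verified Lean document; each statement's English description precedes it below -/
import Mathlib

section
/- Let d ≥ 1, M ≥ 2, let K be a finite nonempty key set with probability weights p : K → ℝ (p k ≥ 0 for all k and Σ_k p k = 1), and let Enc : K → Fin M → ((d+1)×(d+1) complex matrices) be such that every Enc k m is positive semidefinite with trace 1 and (Enc k m)·e_⊥ = 0, and such that for every key k and all messages m ≠ m' one has (Enc k m)·(Enc k m') = 0 (which holds for every perfectly correct scheme). Then for every message m₀ ∈ Fin M there exist a message m₁ ∈ Fin M with m₁ ≠ m₀ and, for each key k, binary POVMs {P k 0, P k 1} and {Q k 0, Q k 1} on ℂ^{d+1} (all four matrices positive semidefinite, with P k 0 + P k 1 = 1 and Q k 0 + Q k 1 = 1) such that (1/2)·Σ_{k∈K} p k · ( Re tr((P k 0 ⊗ Q k 0) · V (Enc k m₀) V†) + Re tr((P k 1 ⊗ Q k 1) · V (Enc k m₁) V†) ) ≥ 1/2 + (max_{m ∈ Fin M} Σ_{k∈K} p k · λ_max(Enc k m))/16. (That is, there is a cloning-indistinguishability attack, using the cloning channel V, whose success probability is at least 1/2 + μ/16 where μ is the maximum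 over messages of the key-averaged largest eigenvalue of the ciphertext.) -/
open Matrix Kronecker
open scoped ComplexOrder

/-- The last standard basis vector `e_⊥ = e_d` of `ℂ^{d+1}`. -/
noncomputable def perp (d : ℕ) : Fin (d + 1) → ℂ :=
  fun i => if i = Fin.last d then 1 else 0

/-- The cloning map `V : ℂ^{d+1} → ℂ^{d+1} ⊗ ℂ^{d+1}`,
`V_{(i,j),k} = (1/√2)(δ_{i,d} δ_{j,k} + δ_{i,k} δ_{j,d})`. -/
noncomputable def cloneV (d : ℕ) : Matrix (Fin (d + 1) × Fin (d + 1)) (Fin (d + 1)) ℂ :=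
  fun p k => ((1 / Real.sqrt 2 : ℝ) : ℂ) *
    ((if p.1 = Fin.last d then 1 else 0) * (if p.2 = k then 1 else 0) +
     (if p.1 = k then 1 else 0) * (if p.2 = Fin.last d then 1 else 0))


lemma aux_pinv {n : Type*} [Fintype n] [DecidableEq n] {ρ : Matrix n n ℂ} (h : ρ.IsHermitian) :
    ∃ R : Matrix n n ℂ, Rᴴ = R ∧ R * ρ = ρ * R ∧ ρ * R * ρ = ρ := by
  set U : Matrix n n ℂ := (h.eigenvectorUnitary : Matrix n n ℂ) with hU
  have hUU : Uᴴ * U = 1 := by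
    have := (Matrix.mem_unitaryGroup_iff'.1 h.eigenvectorUnitary.2)
    simpa [Matrix.star_eq_conjTranspose] using this
  set D : Matrix n n ℂ := diagonal (fun i => (h.eigenvalues i : ℂ)) with hD
  set D' : Matrix n n ℂ := diagonal (fun i => ((h.eigenvalues i)⁻¹ : ℂ)) with hD'
  have hρ : ρ = U * D * Uᴴ := by
    have := h.spectral_theorem
    rw [Unitary.conjStarAlgAut_apply] at this
    exact this
  have h1 : ∀ A B : Matrix n n ℂ, U * A * Uᴴ * (U * B * Uᴴ) = U * (A * B) * Uᴴ := by
    intro A B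
    calc _ = U * A * (Uᴴ * U) * B * Uᴴ := by simp only [Matrix.mul_assoc]
      _ = _ := by rw [hUU]; simp only [Matrix.mul_assoc, Matrix.one_mul]
  refine ⟨U * D' * Uᴴ, ?_, ?_, ?_⟩
  · rw [conjTranspose_mul, conjTranspose_mul, conjTranspose_conjTranspose, hD',
      diagonal_conjTranspose, Matrix.mul_assoc]
    congr 3
    ext i
    simp
  · rw [hρ, h1, h1]
    congr 2
    rw [hD, hD', diagonal_mul_diagonal, diagonal_mul_diagonal]
    congr 1; ext i; ring
  · rw [hρ, h1, h1]
    congr 2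
    rw [hD, hD', diagonal_mul_diagonal, diagonal_mul_diagonal]
    congr 1; ext i
    by_cases hi : (h.eigenvalues i : ℂ) = 0
    · simp [hi]
    · field_simp

lemma aux_trace (d : ℕ) (P ρ : Matrix (Fin (d + 1)) (Fin (d + 1)) ℂ) :
    Matrix.trace ((P ⊗ₖ P) * (cloneV d * ρ * (cloneV d)ᴴ)) =
      P (Fin.last d) (Fin.last d) * trace (P * ρ) + (P * ρ * P) (Fin.last d) (Fin.last d) := by
  set l := Fin.last d
  have hc : ((1 / Real.sqrt 2 : ℝ) : ℂ) * ((1 / Real.sqrt 2 : ℝ) : ℂ) = 1 / 2 := by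
    rw [← Complex.ofReal_mul]
    have : (1 / Real.sqrt 2) * (1 / Real.sqrt 2) = (1 / 2 : ℝ) := by
      rw [div_mul_div_comm, Real.mul_self_sqrt (by norm_num)]; norm_num
    rw [this]; norm_num
  set c := ((1 / Real.sqrt 2 : ℝ) : ℂ) with hcdef
  have hcs : star c = c := by simp [hcdef]
  have hPV : ∀ a b k, ((P ⊗ₖ P) * cloneV d) (a, b) k = c * (P a l * P b k + P a k * P b l) := by
    intro a b k
    simp only [Matrix.mul_apply, Fintype.sum_prod_type, cloneV, kroneckerMap_apply]
    simp only [← hcdef, mul_add, Finset.sum_add_distrib]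
    simp [l]
    ring
  have hVP : ∀ j k, ((cloneV d)ᴴ * ((P ⊗ₖ P) * cloneV d)) j k =
      (1 / 2) * (2 * (P l l * P j k + P j l * P l k)) := by
    intro j k
    rw [← hc]
    simp only [Matrix.mul_apply (M := (cloneV d)ᴴ), Fintype.sum_prod_type, hPV]
    simp only [conjTranspose_apply, cloneV, ← hcdef, star_mul', star_add, hcs, mul_add, add_mul, Finset.sum_add_distrib]
    simp [l, apply_ite star, Finset.sum_ite_eq]
    ring
  rw [← Matrix.mul_assoc, Matrix.trace_mul_comm, ← Matrix.mul_assoc, ← Matrix.mul_assoc,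
    Matrix.mul_assoc (cloneV d)ᴴ]
  simp only [Matrix.trace, diag_apply, Matrix.mul_apply (N := ρ), hVP]
  rw [Matrix.mul_apply]
  simp only [Matrix.mul_apply (M := P), Finset.mul_sum, Finset.sum_mul]
  rw [Finset.sum_comm (f := fun x i => P l i * ρ i x * P x l)]
  rw [Finset.sum_comm (f := fun x i => P l l * (P x i * ρ i x))]
  rw [← Finset.sum_add_distrib, Finset.sum_comm]
  refine Finset.sum_congr rfl fun x _ => ?_
  rw [← Finset.sum_add_distrib]
  refine Finset.sum_congr rfl fun y _ => ?_
  ring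

lemma aux_proj {n : Type*} [Fintype n] [DecidableEq n] {P : Matrix n n ℂ} (h : Pᴴ = P)
    (h2 : P * P = P) : P.PosSemidef ∧ (1 - P).PosSemidef := by
  constructor
  · have := posSemidef_conjTranspose_mul_self P
    rwa [h, h2] at this
  · have := posSemidef_conjTranspose_mul_self (1 - P)
    rw [conjTranspose_sub, h, conjTranspose_one] at this
    have e : (1 - P) * (1 - P) = 1 - P := by
      rw [Matrix.mul_sub, Matrix.sub_mul, Matrix.sub_mul, h2]; simp
    rwa [e] at this

/-- pure algebra: the attack for one pair of ciphertexts. -/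
lemma aux_alg {d : ℕ} {ρ σ : Matrix (Fin (d + 1)) (Fin (d + 1)) ℂ}
    (hρ : ρ.IsHermitian) (hσ : σ.IsHermitian) (tρ : trace ρ = 1) (tσ : trace σ = 1)
    (eρ : ρ *ᵥ perp d = 0) (eσ : σ *ᵥ perp d = 0) (hρσ : ρ * σ = 0)
    (φ : Fin (d + 1) → ℂ) (hφ : star φ ⬝ᵥ φ = 1) (l : ℝ) (hl : l ≠ 0)
    (hφρ : ρ *ᵥ φ = (l : ℂ) • φ) :
    ∃ P : Matrix (Fin (d + 1)) (Fin (d + 1)) ℂ, P.PosSemidef ∧ (1 - P).PosSemidef ∧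
      (Matrix.trace ((P ⊗ₖ P) * (cloneV d * ρ * (cloneV d)ᴴ))).re +
      (Matrix.trace (((1 - P) ⊗ₖ (1 - P)) * (cloneV d * σ * (cloneV d)ᴴ))).re = 1 + l / 8 := by
  obtain ⟨R, hR, hRc, hRR⟩ := aux_pinv hρ
  set e := perp d with he
  have hl' : (l : ℂ) ≠ 0 := by exact_mod_cast hl
  obtain ⟨S, hS⟩ : ∃ S, S = R * ρ := ⟨_, rfl⟩
  have hSh : Sᴴ = S := by rw [hS, conjTranspose_mul, hR, hρ.eq, hRc]
  have hSS : S * S = S := by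
    rw [hS]; rw [Matrix.mul_assoc, ← Matrix.mul_assoc ρ, hRR]
  have hSρ : S * ρ = ρ := by rw [hS, hRc, hRR]
  have hSe : S *ᵥ e = 0 := by rw [hS, ← mulVec_mulVec, eρ, mulVec_zero]
  have hSσ : S * σ = 0 := by rw [hS, Matrix.mul_assoc, hρσ, Matrix.mul_zero]
  have hφ' : φ = (l : ℂ)⁻¹ • (ρ *ᵥ φ) := by rw [hφρ, smul_smul, inv_mul_cancel₀ hl', one_smul]
  have hSφ : S *ᵥ φ = φ := by
    rw [hφ', mulVec_smul, mulVec_mulVec, hSρ]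
  have hee : star e ⬝ᵥ e = 1 := by simp [he, perp, dotProduct]
  have hstar : ∀ (A : Matrix (Fin (d + 1)) (Fin (d + 1)) ℂ) (w : Fin (d + 1) → ℂ),
      star w ᵥ* A = star (Aᴴ *ᵥ w) := by
    intro A w; rw [star_mulVec, conjTranspose_conjTranspose]
  have heφ : star e ⬝ᵥ φ = 0 := by
    rw [hφ', dotProduct_smul, dotProduct_mulVec, hstar, hρ.eq, eρ]; simp
  have hφe : star φ ⬝ᵥ e = 0 := by
    rw [← star_star e, star_dotProduct_star, heφ, star_zero]
  have hσφ : σ *ᵥ φ = 0 := by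
    have : σ * ρ = 0 := by
      have := congrArg conjTranspose hρσ
      rwa [conjTranspose_mul, hρ.eq, hσ.eq, conjTranspose_zero] at this
    rw [hφ', mulVec_smul, mulVec_mulVec, this]; simp
  obtain ⟨t, ht, hts⟩ : ∃ t : ℂ, t * t = 3 / 4 ∧ star t = t := by
    refine ⟨((Real.sqrt (3 / 4) : ℝ) : ℂ), ?_, by simp⟩
    rw [← Complex.ofReal_mul, Real.mul_self_sqrt (by norm_num)]; norm_num
  set v : Fin (d + 1) → ℂ := (1 / 2 : ℂ) • e + t • φ with hv
  have hsv : star v = (1 / 2 : ℂ) • star e + t • star φ := by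
    rw [hv, star_add, star_smul, star_smul, hts]; simp
  have hvv : star v ⬝ᵥ v = 1 := by
    rw [hsv, hv]
    simp only [add_dotProduct, dotProduct_add, smul_dotProduct, dotProduct_smul, hee, hφ, heφ, hφe,
      smul_eq_mul]
    linear_combination ht
  have hve : star v ⬝ᵥ e = 1 / 2 := by
    rw [hsv]
    simp only [add_dotProduct, smul_dotProduct, hee, hφe, smul_eq_mul]; ring
  have hvφ : star φ ⬝ᵥ v = t := by
    rw [hv]
    simp only [dotProduct_add, dotProduct_smul, hφ, hφe, smul_eq_mul]; ring
  have hσv : σ *ᵥ v = 0 := by rw [hv, mulVec_add, mulVec_smul, mulVec_smul, eσ, hσφ]; simp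
  have hρv : ρ *ᵥ v = (t * l) • φ := by
    rw [hv, mulVec_add, mulVec_smul, mulVec_smul, eρ, hφρ, smul_smul]; simp
  have hSv : S *ᵥ v = t • φ := by
    rw [hv, mulVec_add, mulVec_smul, mulVec_smul, hSe, hSφ]; simp
  set F := vecMulVec φ (star φ) with hF
  set G := vecMulVec v (star v) with hG
  have hFh : Fᴴ = F := by rw [hF, conjTranspose_vecMulVec, star_star]
  have hGh : Gᴴ = G := by rw [hG, conjTranspose_vecMulVec, star_star]
  have hFm : ∀ w, F *ᵥ w = (star φ ⬝ᵥ w) • φ := by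
    intro w; rw [hF, vecMulVec_mulVec]; simp
  have hGm : ∀ w, G *ᵥ w = (star v ⬝ᵥ w) • v := by
    intro w; rw [hG, vecMulVec_mulVec]; simp
  have hAF : ∀ A : Matrix (Fin (d + 1)) (Fin (d + 1)) ℂ, A * F = vecMulVec (A *ᵥ φ) (star φ) := by
    intro A; rw [hF, mul_vecMulVec]
  have hAG : ∀ A : Matrix (Fin (d + 1)) (Fin (d + 1)) ℂ, A * G = vecMulVec (A *ᵥ v) (star v) := by
    intro A; rw [hG, mul_vecMulVec]
  have hSF : S * F = F := by rw [hAF, hSφ]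
  have hFS : F * S = F := by
    have := congrArg conjTranspose hSF
    rwa [conjTranspose_mul, hFh, hSh] at this
  have hFF : F * F = F := by rw [hAF, hFm, hφ, one_smul]
  have hGG : G * G = G := by rw [hAG, hGm, hvv, one_smul]
  have hSG : S * G = F * G := by rw [hAG, hAG, hSv, hFm, hvφ]
  have hGS : G * S = G * F := by
    have := congrArg conjTranspose hSG
    rwa [conjTranspose_mul, conjTranspose_mul, hFh, hSh, hGh] at this
  have hσF : σ * F = 0 := by rw [hAF, hσφ]; simp
  have hσG : σ * G = 0 := by rw [hAG, hσv]; simp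
  set P := S - F + G with hP
  have hPh : Pᴴ = P := by rw [hP, conjTranspose_add, conjTranspose_sub, hSh, hFh, hGh]
  have hPP : P * P = P := by
    rw [hP]
    simp only [Matrix.add_mul, Matrix.mul_add, Matrix.sub_mul, Matrix.mul_sub, hSS, hSF, hFS, hFF,
      hGG, hSG, hGS]
    abel
  have hσS : σ * S = 0 := by
    have := congrArg conjTranspose hSσ
    rwa [conjTranspose_mul, hσ.eq, hSh, conjTranspose_zero] at this
  have hσP : σ * P = 0 := by
    rw [hP, Matrix.mul_add, Matrix.mul_sub, hσS, hσF, hσG]; simp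
  have hPσ : P * σ = 0 := by
    have := congrArg conjTranspose hσP
    rwa [conjTranspose_mul, hσ.eq, hPh, conjTranspose_zero] at this
  have hPe : P *ᵥ e = (1 / 2 : ℂ) • v := by
    rw [hP, add_mulVec, sub_mulVec, hSe, hFm, hGm, hφe, hve]; simp
  have hent : ∀ A : Matrix (Fin (d + 1)) (Fin (d + 1)) ℂ,
      A (Fin.last d) (Fin.last d) = star e ⬝ᵥ (A *ᵥ e) := by
    intro A
    simp [he, perp, dotProduct, mulVec]
  have hev : star e ⬝ᵥ v = 1 / 2 := by
    rw [hv]; simp only [dotProduct_add, dotProduct_smul, hee, heφ, smul_eq_mul]; ring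
  have hPdd : P (Fin.last d) (Fin.last d) = 1 / 4 := by
    rw [hent P, hPe, dotProduct_smul, hev, smul_eq_mul]; norm_num
  have hPρP : (P * ρ * P) (Fin.last d) (Fin.last d) = 3 / 16 * l := by
    rw [hent (P * ρ * P), ← mulVec_mulVec, ← mulVec_mulVec, hPe, mulVec_smul, hρv, dotProduct_mulVec, hstar,
      hPh, hPe, star_smul, smul_dotProduct, dotProduct_smul, dotProduct_smul, hsv]
    simp only [add_dotProduct, smul_dotProduct, heφ, hφ, smul_eq_mul]
    simp
    linear_combination (l / 4 : ℂ) * ht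
  have htF : trace (F * ρ) = l := by
    rw [trace_mul_comm, hAF, hφρ, trace_vecMulVec, dotProduct_comm, dotProduct_smul, hφ]; simp
  have htG : trace (G * ρ) = 3 / 4 * l := by
    rw [trace_mul_comm, hAG, hρv, trace_vecMulVec, dotProduct_comm, dotProduct_smul, hsv]
    simp only [add_dotProduct, smul_dotProduct, heφ, hφ, smul_eq_mul]
    linear_combination (l : ℂ) * ht
  have htP : trace (P * ρ) = 1 - l / 4 := by
    rw [hP, Matrix.add_mul, Matrix.sub_mul, hSρ, trace_add, trace_sub, htF, htG, tρ]; ring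
  obtain ⟨p1, p2⟩ := aux_proj hPh hPP
  refine ⟨P, p1, p2, ?_⟩
  have h1 : Matrix.trace ((P ⊗ₖ P) * (cloneV d * ρ * (cloneV d)ᴴ)) = ((1 / 4 + l / 8 : ℝ) : ℂ) := by
    rw [aux_trace, hPdd, htP, hPρP]; push_cast; ring
  have h2 : Matrix.trace (((1 - P) ⊗ₖ (1 - P)) * (cloneV d * σ * (cloneV d)ᴴ)) =
      ((3 / 4 : ℝ) : ℂ) := by
    have a : (1 - P) * σ = σ := by rw [Matrix.sub_mul, hPσ]; simp
    have b : σ * (1 - P) = σ := by rw [Matrix.mul_sub, hσP]; simp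
    have c : σ (Fin.last d) (Fin.last d) = 0 := by rw [hent σ, eσ]; simp
    rw [aux_trace, a, b, c, tσ, Matrix.sub_apply, hPdd]; simp; norm_num
  rw [h1, h2, Complex.ofReal_re, Complex.ofReal_re]; ring

lemma aux_pair {d : ℕ} {ρ σ : Matrix (Fin (d + 1)) (Fin (d + 1)) ℂ}
    (hρ : ρ.PosSemidef) (hσ : σ.IsHermitian) (tρ : trace ρ = 1) (tσ : trace σ = 1)
    (eρ : ρ *ᵥ perp d = 0) (eσ : σ *ᵥ perp d = 0) (hρσ : ρ * σ = 0) :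
    ∃ P : Matrix (Fin (d + 1)) (Fin (d + 1)) ℂ, P.PosSemidef ∧ (1 - P).PosSemidef ∧
      (Matrix.trace ((P ⊗ₖ P) * (cloneV d * ρ * (cloneV d)ᴴ))).re +
      (Matrix.trace (((1 - P) ⊗ₖ (1 - P)) * (cloneV d * σ * (cloneV d)ᴴ))).re =
        1 + (⨆ i, hρ.1.eigenvalues i) / 8 := by
  obtain ⟨i, hi⟩ := exists_eq_ciSup_of_finite (f := hρ.1.eigenvalues)
  rw [← hi]
  refine aux_alg hρ.1 hσ tρ tσ eρ eσ hρσ (⇑(hρ.1.eigenvectorBasis i)) ?_ _ ?_ ?_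
  · have h := hρ.1.eigenvectorBasis.orthonormal.1 i
    have h2 := inner_self_eq_norm_sq_to_K (𝕜 := ℂ) (hρ.1.eigenvectorBasis i)
    rw [h, EuclideanSpace.inner_eq_star_dotProduct, dotProduct_comm] at h2
    simpa using h2
  · intro h0
    have hz : ∀ j, hρ.1.eigenvalues j = 0 := by
      intro j
      refine le_antisymm ?_ (hρ.eigenvalues_nonneg j)
      rw [← h0, hi]
      exact le_ciSup (Set.finite_range _).bddAbove j
    have := hρ.1.trace_eq_sum_eigenvalues
    rw [tρ] at this
    simp [hz] at this
  · have := hρ.1.mulVec_eigenvectorBasis i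
    rw [this]; ext j; simp

/-- Corollary 1 of the paper: every correct QECM scheme admits a
cloning-indistinguishability attack (using the cloning channel `V`) with success
probability at least `1/2 + μ/16`, where `μ` is the maximum over messages of the
key-averaged largest eigenvalue of the ciphertext. -/
theorem cloning_indistinguishability_attack (d M : ℕ) (hd : 1 ≤ d) (hM : 2 ≤ M)
    (K : Type) [Fintype K] [Nonempty K]
    (p : K → ℝ) (hp : ∀ k, 0 ≤ p k) (hpsum : ∑ k, p k = 1)
    (Enc : K → Fin M → Matrix (Fin (d + 1)) (Fin (d + 1)) ℂ)
    (hEnc : ∀ k m, (Enc k m).PosSemidef)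
    (htr : ∀ k m, Matrix.trace (Enc k m) = 1)
    (hperp : ∀ k m, Enc k m *ᵥ perp d = 0)
    (horth : ∀ k (m m' : Fin M), m ≠ m' → Enc k m * Enc k m' = 0)
    (m₀ : Fin M) :
    ∃ m₁ : Fin M, m₁ ≠ m₀ ∧
    ∃ P Q : K → Fin 2 → Matrix (Fin (d + 1)) (Fin (d + 1)) ℂ,
      (∀ k b, (P k b).PosSemidef) ∧ (∀ k b, (Q k b).PosSemidef) ∧
      (∀ k, P k 0 + P k 1 = 1) ∧ (∀ k, Q k 0 + Q k 1 = 1) ∧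
      (1 / 2) * ∑ k, p k *
          ((Matrix.trace ((P k 0 ⊗ₖ Q k 0) * (cloneV d * Enc k m₀ * (cloneV d)ᴴ))).re +
           (Matrix.trace ((P k 1 ⊗ₖ Q k 1) * (cloneV d * Enc k m₁ * (cloneV d)ᴴ))).re) ≥
        1 / 2 + (⨆ m : Fin M, ∑ k, p k * ⨆ i, (hEnc k m).1.eigenvalues i) / 16 := by
  classical
  haveI : Nonempty (Fin M) := ⟨m₀⟩
  obtain ⟨ms, hms⟩ := exists_eq_ciSup_of_finite
    (f := fun m : Fin M => ∑ k, p k * ⨆ i, (hEnc k m).1.eigenvalues i)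
  rw [← hms]
  have key : ∀ m m', m ≠ m' → ∀ k, ∃ P : Matrix (Fin (d + 1)) (Fin (d + 1)) ℂ,
      P.PosSemidef ∧ (1 - P).PosSemidef ∧
      (Matrix.trace ((P ⊗ₖ P) * (cloneV d * Enc k m * (cloneV d)ᴴ))).re +
      (Matrix.trace (((1 - P) ⊗ₖ (1 - P)) * (cloneV d * Enc k m' * (cloneV d)ᴴ))).re =
        1 + (⨆ i, (hEnc k m).1.eigenvalues i) / 8 := fun m m' h k =>
    aux_pair (hEnc k m) (hEnc k m').1 (htr k m) (htr k m') (hperp k m) (hperp k m')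
      (horth k m m' h)
  have fin : (1 / 2) * ∑ k, p k * (1 + (⨆ i, (hEnc k ms).1.eigenvalues i) / 8) =
      1 / 2 + (∑ k, p k * ⨆ i, (hEnc k ms).1.eigenvalues i) / 16 := by
    simp only [mul_add, Finset.sum_add_distrib, mul_one, hpsum, ← mul_div_assoc, ← Finset.sum_div]
    ring
  by_cases h : ms = m₀
  · haveI : Nontrivial (Fin M) := Fin.nontrivial_iff_two_le.2 hM
    obtain ⟨m₁, hm₁⟩ := exists_ne m₀
    choose P h1 h2 h3 using key ms m₁ (by rw [h]; exact hm₁.symm)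
    refine ⟨m₁, hm₁, fun k b => if b = 0 then P k else 1 - P k,
      fun k b => if b = 0 then P k else 1 - P k, ?_, ?_, ?_, ?_, ?_⟩
    · intro k b; dsimp only; split_ifs; exacts [h1 k, h2 k]
    · intro k b; dsimp only; split_ifs; exacts [h1 k, h2 k]
    · intro k; simp
    · intro k; simp
    · rw [← fin]
      simp only [if_true, one_ne_zero, if_false, ← h, h3]
      exact le_refl _
  · choose P h1 h2 h3 using key ms m₀ h
    refine ⟨ms, h, fun k b => if b = 0 then 1 - P k else P k,
      fun k b => if b = 0 then 1 - P k else P k, ?_, ?_, ?_, ?_, ?_⟩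
    · intro k b; dsimp only; split_ifs; exacts [h2 k, h1 k]
    · intro k b; dsimp only; split_ifs; exacts [h2 k, h1 k]
    · intro k; simp
    · intro k; simp
    · rw [← fin]
      simp only [if_true, one_ne_zero, if_false]
      refine le_of_eq ?_
      congr 1
      refine Finset.sum_congr rfl fun k _ => ?_
      rw [← h3 k, add_comm]
end

section
/- Let d ≥ 1 and let M ≥ 2 be an even integer. Let K be a finite nonempty key set with probability weights p : K → ℝ (p k ≥ 0 and Σ_k p k = 1), and let Enc : K → Fin M → (d×d complex matrices) be such that every Enc k m is positive semidefinite with trace 1, and such that for every key k and all messages m ≠ m' one has (Enc k m)·(Enc k m') = 0 (which holds for every perfectly correct scheme). Then for every ε > 0 there exist: a dimension n ≥ 1; a finite family of Kraus operators A_j (j ∈ Fin r) of size (n·n)×d (complex matrices from ℂ^d to ℂ^n ⊗ ℂ^n) with Σ_j A_j† A_j = 1_d; and, for each key k, POVMs {P k m}_{m∈Fin M} and {Q k m}_{m∈Fin M} on ℂ^n (positive semidefinite n×n matrices with Σ_m P k m = 1 and Σ_m Q k m = 1), such that the winning probability of the corresponding cloning attack satisfies (1/M)·Σ_{m∈Fin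 M} Σ_{k∈K} p k · Σ_j Re tr((P k m ⊗ Q k m) · A_j · (Enc k m) · A_j†) ≥ ((1/2 − e⁻¹)/4) · ln(M/2) / d − ε. (In particular, the optimal cloning-attack winning probability for a uniformly distributed message is at least c·(log₂ M − 1)/d for an absolute constant c > 0.02285.) -/
open Matrix Kronecker
open scoped ComplexOrder

open MeasureTheory ProbabilityTheory in
lemma ca_gauss_tail (s : ℝ) (hs : 0 ≤ s) :
    Real.exp (-(s+1)^2/2) / 3 ≤ (gaussianReal 0 1).real (Set.Ici s) := by
  have h1 : (gaussianReal 0 1).real (Set.Ici s) = ∫ x in Set.Ici s, gaussianPDFReal 0 1 x := by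
    rw [Measure.real, gaussianReal_apply_eq_integral _ (by norm_num)]
    rw [ENNReal.toReal_ofReal]
    exact integral_nonneg (fun x => gaussianPDFReal_nonneg _ _ _)
  rw [h1]
  have h2 : ∫ x in Set.Icc s (s+1), gaussianPDFReal 0 1 x ≤ ∫ x in Set.Ici s, gaussianPDFReal 0 1 x := by
    apply setIntegral_mono_set
    · exact (integrable_gaussianPDFReal 0 1).integrableOn
    · exact ae_of_all _ (fun x => gaussianPDFReal_nonneg _ _ _)
    · exact (Set.Icc_subset_Ici_self).eventuallyLE
  refine le_trans ?_ h2
  have h3 : ∫ x in Set.Icc s (s+1), Real.exp (-(s+1)^2/2) / 3 ≤ ∫ x in Set.Icc s (s+1), gaussianPDFReal 0 1 x := by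
    apply setIntegral_mono_on
    · simp
    · exact (integrable_gaussianPDFReal 0 1).integrableOn
    · exact measurableSet_Icc
    · intro x hx
      rw [gaussianPDFReal, div_eq_inv_mul]
      have hpi : √(2 * Real.pi * ((1:NNReal):ℝ)) ≤ 3 := by
        rw [Real.sqrt_le_left (by norm_num)]
        have := Real.pi_lt_four
        norm_num; linarith
      have hpos : 0 < √(2 * Real.pi * ((1:NNReal):ℝ)) := by
        apply Real.sqrt_pos.2; have := Real.pi_pos; norm_num; exact this
      have hx2 : x^2 ≤ (s+1)^2 := by
        have h1 := hx.1
        have h2 := hx.2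
        exact pow_le_pow_left₀ (by linarith) h2 2
      apply mul_le_mul (inv_anti₀ hpos hpi) _ (Real.exp_pos _).le (inv_nonneg.2 hpos.le)
      apply Real.exp_le_exp.2
      norm_num
      linarith
  refine le_trans ?_ h3
  simp

open MeasureTheory ProbabilityTheory in
lemma ca_cov {E : Type*} [NormedAddCommGroup E] [InnerProductSpace ℝ E] [FiniteDimensional ℝ E]
    [MeasurableSpace E] [BorelSpace E] (v w : E) :
    ∫ x, inner ℝ v x * inner ℝ w x ∂(stdGaussian E) = inner ℝ v w := by
  have h := covarianceBilin_apply_eq_cov (μ := stdGaussian E) IsGaussian.memLp_two_id v w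
  rw [covarianceBilin_stdGaussian] at h
  have h0 (v : E) : ∫ x, inner ℝ v x ∂(stdGaussian E) = 0 := by
    simpa using integral_strongDual_stdGaussian (innerSL ℝ v)
  simp only [covariance, h0, sub_zero] at h
  rw [← h]; rfl

open MeasureTheory ProbabilityTheory in
lemma ca_gauss_max {E : Type*} [NormedAddCommGroup E] [InnerProductSpace ℝ E] [FiniteDimensional ℝ E]
    [MeasurableSpace E] [BorelSpace E] {κ : Type*} [Fintype κ] [Nonempty κ] (v : κ → E)
    (hv : Orthonormal ℝ v) (f : E → ℝ) (hf : Integrable f (stdGaussian E))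
    (hle : ∀ i x, (inner ℝ (v i) x)^2 ≤ f x) :
    (1/7) * Real.log (Fintype.card κ) ≤ ∫ x, f x ∂(stdGaussian E) := by
  classical
  set μ := stdGaussian E with hμ
  have hf0 : ∀ x, 0 ≤ f x := fun x => le_trans (sq_nonneg _) (hle (Classical.arbitrary κ) x)
  by_cases hc : Real.log (Fintype.card κ) ≤ 7
  · have i := Classical.arbitrary κ
    have h1 := ca_cov (v i) (v i)
    have h2 : ∫ x, inner ℝ (v i) x * inner ℝ (v i) x ∂μ ≤ ∫ x, f x ∂μ := by
      apply integral_mono_of_nonneg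
      · exact ae_of_all _ (fun x => mul_self_nonneg _)
      · exact hf
      · exact ae_of_all _ (fun x => by have := hle i x; simpa [sq] using this)
    rw [h1, real_inner_self_eq_norm_sq, hv.1 i] at h2
    linarith
  push Not at hc
  set N : ℝ := (Fintype.card κ : ℝ) with hN
  have hNpos : 0 < N := by rw [hN]; exact_mod_cast Fintype.card_pos
  set u := √(2 * Real.log N) with hu
  have hu2 : u^2 = 2 * Real.log N := Real.sq_sqrt (by linarith)
  have hu3 : 3 ≤ u := by
    rw [hu]; apply Real.le_sqrt_of_sq_le; linarith
  set s := u - 1 with hs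
  have htail := ca_gauss_tail s (by linarith)
  have hexp : Real.exp (-(s+1)^2/2) = 1 / N := by
    rw [hs, sub_add_cancel, neg_div, hu2, mul_div_cancel_left₀ _ (by norm_num), Real.exp_neg,
      Real.exp_log hNpos, one_div]
  rw [hexp] at htail
  let X : κ → E → ℝ := fun i x => inner ℝ (v i) x
  have hXm : ∀ i, Measurable (X i) := fun i => (innerSL ℝ (v i)).continuous.measurable
  have hlaw : HasGaussianLaw (fun x ↦ (X · x)) μ := by
    have := (IsGaussian.hasGaussianLaw_id (μ := μ)).map (ContinuousLinearMap.pi (fun i => innerSL ℝ (v i)))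
    exact this
  have hX0 : ∀ i, ∫ x, X i x ∂μ = 0 := fun i => by
    simpa using integral_strongDual_stdGaussian (innerSL ℝ (v i))
  have hind : iIndepFun X μ := by
    apply hlaw.iIndepFun_of_covariance_eq_zero
    intro i j hij
    rw [covariance]
    simp only [hX0, sub_zero]
    exact (ca_cov (v i) (v j)).trans (hv.2 hij)
  have hmap : ∀ i, μ.map (X i) = gaussianReal 0 1 := by
    intro i
    have h := (hlaw.eval i).map_eq_gaussianReal
    have hvar : Var[X i; μ] = 1 := by
      have := variance_dual_stdGaussian (innerSL ℝ (v i))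
      rw [innerSL_apply_norm, hv.1 i] at this
      simpa using this
    rw [hX0, hvar] at h
    simpa using h
  have hlt : ∀ i, μ.real (X i ⁻¹' Set.Iio s) ≤ 1 - 1/N/3 := by
    intro i
    have h1 : μ.real (X i ⁻¹' Set.Iio s) = (gaussianReal 0 1).real (Set.Iio s) := by
      rw [← hmap i, map_measureReal_apply (hXm i) measurableSet_Iio]
    rw [h1]
    have : (Set.Iio s) = (Set.Ici s)ᶜ := by simp
    rw [this, probReal_compl_eq_one_sub measurableSet_Ici]
    linarith
  have hall : μ.real (⋂ i, X i ⁻¹' Set.Iio s) ≤ 3/4 := by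
    have h := hind.measure_inter_preimage_eq_mul Finset.univ (sets := fun _ => Set.Iio s) (fun _ _ => measurableSet_Iio)
    simp only [Finset.mem_univ, Set.iInter_true] at h
    rw [Measure.real, h, ENNReal.toReal_prod]
    calc ∏ i, (μ (X i ⁻¹' Set.Iio s)).toReal ≤ ∏ i : κ, Real.exp (-(1/N/3)) := by
          apply Finset.prod_le_prod
          · intros; positivity
          · intro i _
            refine (hlt i).trans ?_
            have := Real.add_one_le_exp (-(1/N/3))
            linarith
      _ = Real.exp (-(1/3)) := by
          rw [Finset.prod_const, ← Real.exp_nat_mul, Finset.card_univ, ← hN]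
          congr 1; field_simp
      _ ≤ 3/4 := by
          rw [Real.exp_neg]
          have := Real.add_one_le_exp (1/3:ℝ)
          rw [inv_le_comm₀ (Real.exp_pos _) (by norm_num)]
          linarith
  have hmk := mul_meas_ge_le_integral_of_nonneg (ae_of_all μ hf0) hf (s^2)
  have hge : 1/4 ≤ μ.real {x | s^2 ≤ f x} := by
    have hsub : (⋂ i, X i ⁻¹' Set.Iio s)ᶜ ⊆ {x | s^2 ≤ f x} := by
      intro x hx
      simp only [Set.mem_compl_iff, Set.mem_iInter, Set.mem_preimage, Set.mem_Iio, not_forall, not_lt] at hx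
      obtain ⟨i, hi⟩ := hx
      have : s^2 ≤ (X i x)^2 := by
        have : 0 ≤ s := by linarith
        gcongr
      exact this.trans (hle i x)
    have := measureReal_mono (μ := μ) hsub
    rw [probReal_compl_eq_one_sub (MeasurableSet.iInter (fun i => hXm i measurableSet_Iio))] at this
    linarith
  have : s^2 * (1/4) ≤ s^2 * μ.real {x | s^2 ≤ f x} := by gcongr
  nlinarith

lemma ca_compact_hull {W : Type*} [NormedAddCommGroup W] [NormedSpace ℝ W] [FiniteDimensional ℝ W]
    (S : Set W) (hS : IsCompact S) : IsCompact (convexHull ℝ S) := by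
  classical
  rcases S.eq_empty_or_nonempty with rfl | ⟨z0, hz0⟩
  · simp
  let N := Module.finrank ℝ W + 1
  let Φ : (Fin N → ℝ) × (Fin N → W) → W := fun q => ∑ i, q.1 i • q.2 i
  have hΦ : Continuous Φ := by fun_prop
  have hc : IsCompact ((stdSimplex ℝ (Fin N)) ×ˢ (Set.univ.pi (fun _ : Fin N => S))) :=
    (isCompact_stdSimplex ℝ (Fin N)).prod (isCompact_univ_pi (fun _ => hS))
  have himg := hc.image hΦ
  convert himg using 1
  apply Set.Subset.antisymm
  · intro x hx
    obtain ⟨ι, hι, z, w, hz, haff, hw, hw1, hx⟩ := eq_pos_convex_span_of_mem_convexHull hx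
    have hcard : Fintype.card ι ≤ Fintype.card (Fin N) := by
      simpa [N] using haff.card_le_finrank_succ.trans (Nat.succ_le_succ (Submodule.finrank_le _))
    obtain ⟨e⟩ := Function.Embedding.nonempty_of_card_le hcard
    refine ⟨(Function.extend e w 0, Function.extend e z (fun _ => z0)), ⟨⟨?_, ?_⟩, ?_⟩, ?_⟩
    · intro i
      by_cases h : ∃ a, e a = i
      · obtain ⟨a, rfl⟩ := h
        simp [e.injective.extend_apply, (hw a).le]
      · simp [Function.extend_apply' _ _ _ h]
    · rw [← hw1]
      symm
      apply Finset.sum_of_injOn e e.injective.injOn (by simp)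
      · intro i _ hi
        have h : ¬ ∃ a, e a = i := by simpa using hi
        simp [Function.extend_apply' _ _ _ h]
      · intro i _
        simp [e.injective.extend_apply]
    · intro i _
      by_cases h : ∃ a, e a = i
      · obtain ⟨a, rfl⟩ := h
        simp only [e.injective.extend_apply]
        exact hz ⟨a, rfl⟩
      · simp [Function.extend_apply' _ _ _ h, hz0]
    · rw [← hx]
      symm
      apply Finset.sum_of_injOn e e.injective.injOn (by simp)
      · intro i _ hi
        have h : ¬ ∃ a, e a = i := by simpa using hi
        simp [Function.extend_apply' _ _ _ h]
      · intro i _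
        simp [e.injective.extend_apply]
  · rintro _ ⟨q, ⟨⟨hq1, hq2⟩, hq3⟩, rfl⟩
    exact (convex_convexHull ℝ S).sum_mem (fun i _ => hq1 i) hq2
      (fun i _ => subset_convexHull ℝ S (hq3 i (Set.mem_univ i)))

open MeasureTheory ProbabilityTheory in
lemma ca_normsq {E : Type*} [NormedAddCommGroup E] [InnerProductSpace ℝ E] [FiniteDimensional ℝ E]
    [MeasurableSpace E] [BorelSpace E] :
    ∫ x, ‖x‖^2 ∂(stdGaussian E) = Module.finrank ℝ E := by
  let b := stdOrthonormalBasis ℝ E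
  have hb : ∀ x : E, ‖x‖^2 = ∑ i, inner ℝ (b i) x * inner ℝ (b i) x := by
    intro x
    rw [← b.sum_sq_inner_right x]
    simp [sq]
  simp_rw [hb]
  rw [integral_finsetSum]
  · simp_rw [ca_cov]
    simp [b.orthonormal.1]
  · intro i _
    have h : MemLp (fun x : E => inner ℝ (b i) x) 2 (stdGaussian E) :=
      ((IsGaussian.hasGaussianLaw_id (μ := stdGaussian E)).map (innerSL ℝ (b i))).memLp_two
    exact h.integrable_mul h

open MeasureTheory ProbabilityTheory in
lemma ca_integrable {E : Type*} [NormedAddCommGroup E] [InnerProductSpace ℝ E] [FiniteDimensional ℝ E]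
    [MeasurableSpace E] [BorelSpace E] {W : Type*} [NormedAddCommGroup W] [NormedSpace ℝ W]
    [FiniteDimensional ℝ W] (F : E → W) (hF : Continuous F)
    (hhom : ∀ (t : ℝ) x, 0 ≤ t → F (t • x) = t^2 • F x) : Integrable F (stdGaussian E) := by
  have hk : IsCompact (F '' Metric.sphere (0:E) 1) := (isCompact_sphere 0 1).image hF
  obtain ⟨B, hB⟩ := hk.isBounded.exists_norm_le
  have hn : Integrable (fun x : E => ‖x‖^2) (stdGaussian E) := 
    (IsGaussian.memLp_two_id (μ := stdGaussian E)).integrable_norm_pow (by norm_num)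
  apply (hn.const_mul B).mono' hF.aestronglyMeasurable
  apply ae_of_all
  intro x
  by_cases hx : x = 0
  · have := hhom 0 0 le_rfl
    simp at this
    simp [hx, this]
  · have h1 := hhom ‖x‖ (‖x‖⁻¹ • x) (norm_nonneg _)
    rw [smul_smul, mul_inv_cancel₀ (norm_ne_zero_iff.2 hx), one_smul] at h1
    rw [h1, norm_smul, Real.norm_of_nonneg (by positivity), mul_comm]
    gcongr
    apply hB
    refine ⟨_, ?_, rfl⟩
    simp [norm_smul, hx]

open MeasureTheory ProbabilityTheory in
lemma ca_frame {E : Type*} [NormedAddCommGroup E] [InnerProductSpace ℝ E] [FiniteDimensional ℝ E]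
    [MeasurableSpace E] [BorelSpace E] {W : Type*} [NormedAddCommGroup W] [NormedSpace ℝ W]
    [FiniteDimensional ℝ W] (F : E → W) (hF : Continuous F)
    (hhom : ∀ (t : ℝ) x, 0 ≤ t → F (t • x) = t^2 • F x) (hE : 0 < Module.finrank ℝ E) :
    ∃ (r : ℕ) (x : Fin r → E), ∑ j, F (x j) = ∫ x, F x ∂(stdGaussian E) := by
  have hint := ca_integrable F hF hhom
  set D : ℝ := (Module.finrank ℝ E : ℝ) with hD
  have hDpos : 0 < D := by rw [hD]; exact_mod_cast hE
  have hC := ca_compact_hull _ ((isCompact_sphere (0:E) 1).image hF)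
  set Z := D⁻¹ • ∫ x, F x ∂(stdGaussian E) with hZ
  have hmem : Z ∈ convexHull ℝ (F '' Metric.sphere (0:E) 1) := by
    by_contra hno
    obtain ⟨ℓ, u, h1, h2⟩ := geometric_hahn_banach_closed_point (convex_convexHull ℝ _) hC.isClosed hno
    have hn : Integrable (fun x : E => ‖x‖^2) (stdGaussian E) := 
      (IsGaussian.memLp_two_id (μ := stdGaussian E)).integrable_norm_pow (by norm_num)
    have hb : ∀ x : E, ℓ (F x) ≤ u * ‖x‖^2 := by
      intro x
      by_cases hx : x = 0
      · have := hhom 0 0 le_rfl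
        simp at this
        simp [hx, this]
      · have h3 := hhom ‖x‖ (‖x‖⁻¹ • x) (norm_nonneg _)
        rw [smul_smul, mul_inv_cancel₀ (norm_ne_zero_iff.2 hx), one_smul] at h3
        rw [h3, map_smul, smul_eq_mul, mul_comm]
        gcongr
        apply (h1 _ (subset_convexHull ℝ _ ⟨_, _, rfl⟩)).le
        simp [norm_smul, hx]
    have h3 := integral_mono (ℓ.integrable_comp hint) (hn.const_mul u) hb
    rw [integral_const_mul, ca_normsq, ← hD, ℓ.integral_comp_comm hint] at h3
    rw [hZ, map_smul, smul_eq_mul, lt_inv_mul_iff₀ hDpos] at h2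
    linarith
  obtain ⟨ι, hι, w, z, hw0, hw1, hz, hsum⟩ := mem_convexHull_iff_exists_fintype.1 hmem
  choose y hy1 hy2 using hz
  let e := Fintype.equivFin ι
  refine ⟨Fintype.card ι, fun j => √(D * w (e.symm j)) • y (e.symm j), ?_⟩
  rw [e.symm.sum_comp (fun j => F (√(D * w j) • y j))]
  have : ∀ j, F (√(D * w j) • y j) = D • (w j • z j) := by
    intro j
    rw [hhom _ _ (Real.sqrt_nonneg _), Real.sq_sqrt (mul_nonneg hDpos.le (hw0 j)), hy2, mul_smul]
  simp_rw [this]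
  rw [← Finset.smul_sum, hsum, hZ, smul_inv_smul₀ hDpos.ne']

/-- trace of the square (real part). -/
noncomputable def caPurity {d : ℕ} (R : Matrix (Fin d) (Fin d) ℂ) : ℝ := (Matrix.trace (R * R)).re

lemma ca_purity_eq {d : ℕ} (R : Matrix (Fin d) (Fin d) ℂ) (hR : R.PosSemidef) :
    caPurity R = ∑ i, ∑ a, Complex.normSq (R a i) := by
  unfold caPurity
  have h := hR.1
  simp only [Matrix.trace, Matrix.diag, Matrix.mul_apply, Complex.re_sum]
  refine Finset.sum_congr rfl fun i _ => Finset.sum_congr rfl fun a _ => ?_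
  rw [← h.apply i a]
  simp [Complex.normSq_apply, Complex.mul_re]

lemma ca_trace_sq {d : ℕ} (R : Matrix (Fin d) (Fin d) ℂ) (hR : R.PosSemidef) :
    Matrix.trace (R * R) = (caPurity R : ℂ) := by
  apply Complex.ext
  · rfl
  · simp only [Complex.ofReal_im]
    have h : star (Matrix.trace (R * R)) = Matrix.trace (R * R) := by
      rw [← Matrix.trace_conjTranspose, Matrix.conjTranspose_mul, hR.1.eq]
    exact Complex.conj_eq_iff_im.1 h

/-- a good column -/
lemma ca_col {d : ℕ} (R : Matrix (Fin d) (Fin d) ℂ) (hR : R.PosSemidef)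
    (htr : Matrix.trace R = 1) : 0 < caPurity R ∧ ∃ i, 0 < (R i i).re ∧
      caPurity R * (R i i).re ≤ ∑ a, Complex.normSq (R a i) := by
  have hq := ca_purity_eq R hR
  have hdiag : ∀ i, 0 ≤ (R i i).re := fun i => (Complex.le_def.1 (hR.diag_nonneg (i := i))).1
  have hsum : ∑ i, (R i i).re = 1 := by
    have := congrArg Complex.re htr
    simpa [Matrix.trace] using this
  have hpos : 0 < caPurity R := by
    by_contra hneg
    have h0 : ∀ i a, R a i = 0 := by
      intro i a
      have h1 : ∑ i, ∑ a, Complex.normSq (R a i) ≤ 0 := by rw [← hq]; exact not_lt.1 hneg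
      have h2 : Complex.normSq (R a i) ≤ ∑ i, ∑ a, Complex.normSq (R a i) :=
        (Finset.single_le_sum (f := fun a => Complex.normSq (R a i)) (fun _ _ => Complex.normSq_nonneg _) (Finset.mem_univ a)).trans
        (Finset.single_le_sum (f := fun i => ∑ a, Complex.normSq (R a i)) (fun _ _ => Finset.sum_nonneg fun _ _ => Complex.normSq_nonneg _) (Finset.mem_univ i))
      exact Complex.normSq_eq_zero.1 (le_antisymm (h2.trans h1) (Complex.normSq_nonneg _))
    simp [h0] at hsum
  refine ⟨hpos, ?_⟩
  by_contra hno
  push Not at hno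
  have hle : ∀ i, ∑ a, Complex.normSq (R a i) ≤ caPurity R * (R i i).re := by
    intro i
    rcases (hdiag i).eq_or_lt with h | h
    · have hz : ∀ a, R a i = 0 := by
        intro a
        have hii : R i i = 0 := by
          apply Complex.ext
          · exact h.symm
          · exact ((Complex.le_def.1 (hR.diag_nonneg (i := i))).2).symm
        have hv : R *ᵥ (Pi.single i 1) = 0 := by
          rw [← hR.dotProduct_mulVec_zero_iff]
          simp [hii]
        have := congrFun hv a
        simpa using this
      simp [hz]
    · exact (hno i h).le
  obtain ⟨i, hi⟩ : ∃ i, 0 < (R i i).re := by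
    by_contra hn
    push Not at hn
    have : ∑ i, (R i i).re ≤ 0 := Finset.sum_nonpos fun i _ => hn i
    linarith
  have : ∑ i, ∑ a, Complex.normSq (R a i) < ∑ i, caPurity R * (R i i).re :=
    Finset.sum_lt_sum (fun i _ => hle i) ⟨i, Finset.mem_univ _, hno i hi⟩
  rw [← hq, ← Finset.mul_sum, hsum] at this
  linarith

open scoped MatrixOrder Matrix.Norms.L2Operator in
lemma ca_factor {d : ℕ} (R : Matrix (Fin d) (Fin d) ℂ) (hR : R.PosSemidef) :
    ∃ B : Matrix (Fin d) (Fin d) ℂ, R = Bᴴ * B := by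
  obtain ⟨B, hB⟩ := CStarAlgebra.nonneg_iff_eq_star_mul_self.mp hR.nonneg
  exact ⟨B, hB⟩

/-- Cauchy-Schwarz -/
lemma ca_cs {d : ℕ} (R : Matrix (Fin d) (Fin d) ℂ) (hR : R.PosSemidef) (i : Fin d) (ψ : Fin d → ℂ) :
    Complex.normSq (star (fun a => R a i) ⬝ᵥ ψ) ≤ (R i i).re * (star ψ ⬝ᵥ R *ᵥ ψ).re := by
  obtain ⟨B, hB⟩ := ca_factor R hR
  have hcs := inner_mul_inner_self_le (𝕜 := ℂ) (WithLp.toLp 2 (fun a => B a i)) (WithLp.toLp 2 (B *ᵥ ψ))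
  have e1 : inner ℂ (WithLp.toLp 2 (fun a => B a i)) (WithLp.toLp 2 (B *ᵥ ψ)) = star (fun a => R a i) ⬝ᵥ ψ := by
    have : star (fun a => R a i) ⬝ᵥ ψ = (R *ᵥ ψ) i := by
      simp only [dotProduct, mulVec, Pi.star_apply]
      exact Finset.sum_congr rfl fun a _ => by rw [hR.1.apply i a]
    rw [this, hB, ← mulVec_mulVec]
    simp [EuclideanSpace.inner_eq_star_dotProduct, mulVec, dotProduct, mul_comm]
  have e2 : inner ℂ (WithLp.toLp 2 (fun a => B a i)) (WithLp.toLp 2 (fun a => B a i)) = R i i := by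
    rw [hB, EuclideanSpace.inner_eq_star_dotProduct]
    simp [mul_apply, dotProduct, mul_comm]
  have e3 : inner ℂ (WithLp.toLp 2 (B *ᵥ ψ)) (WithLp.toLp 2 (B *ᵥ ψ)) = star ψ ⬝ᵥ R *ᵥ ψ := by
    rw [hB, ← mulVec_mulVec, dotProduct_mulVec, ← star_mulVec, EuclideanSpace.inner_eq_star_dotProduct, dotProduct_comm]
  rw [e2, e3, norm_inner_symm (WithLp.toLp 2 (B *ᵥ ψ)), e1] at hcs
  simpa [Complex.normSq_eq_norm_sq, sq] using hcs

lemma ca_sum_inv {d M : ℕ} (R : Fin M → Matrix (Fin d) (Fin d) ℂ) (hR : ∀ m, (R m).PosSemidef)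
    (htr : ∀ m, Matrix.trace (R m) = 1) (ho : ∀ m m', m ≠ m' → R m * R m' = 0) :
    ∑ m, (caPurity (R m))⁻¹ ≤ d := by
  let B : Matrix (Fin d) (Fin d) ℂ := ∑ m, (((caPurity (R m))⁻¹ : ℝ) : ℂ) • R m
  have hBH : Bᴴ = B := by
    simp only [B, conjTranspose_sum, conjTranspose_smul]
    refine Finset.sum_congr rfl fun m _ => ?_
    rw [(hR m).1.eq]; simp
  have htB : Matrix.trace B = ((∑ m, (caPurity (R m))⁻¹ : ℝ) : ℂ) := by
    simp [B, trace_sum, htr]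
  have htBB : Matrix.trace (B * B) = ((∑ m, (caPurity (R m))⁻¹ : ℝ) : ℂ) := by
    simp only [B, Finset.sum_mul, Finset.mul_sum, trace_sum]
    push_cast
    refine Finset.sum_congr rfl fun m _ => ?_
    rw [Finset.sum_eq_single m]
    · rw [smul_mul_smul_comm, trace_smul, ca_trace_sq _ (hR m)]
      have := (ca_col _ (hR m) (htr m)).1.ne'
      have h2 : (caPurity (R m) : ℂ) ≠ 0 := by exact_mod_cast this
      push_cast
      rw [smul_eq_mul]
      field_simp
    · intro m' _ hne
      rw [smul_mul_smul_comm, ho _ _ hne, smul_zero, trace_zero]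
    · simp
  have hp := (Matrix.posSemidef_conjTranspose_mul_self (B - 1)).trace_nonneg
  rw [conjTranspose_sub, hBH, conjTranspose_one, sub_mul, mul_sub, mul_sub, trace_sub, trace_sub, trace_sub, htBB] at hp
  simp only [mul_one, one_mul, htB, trace_one] at hp
  have := (Complex.le_def.1 hp).1
  simp at this
  linarith

lemma ca_select {d M : ℕ} (hd : 1 ≤ d) (hM : 2 ≤ M) (R : Fin M → Matrix (Fin d) (Fin d) ℂ) (hR : ∀ m, (R m).PosSemidef)
    (htr : ∀ m, Matrix.trace (R m) = 1) (ho : ∀ m m', m ≠ m' → R m * R m' = 0) :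
    ∃ (S : Finset (Fin M)) (v : Fin M → (Fin d → ℂ)), M ≤ 2 * S.card ∧
      (∀ m, (star (v m) ⬝ᵥ v m).re = 1) ∧ (∀ m m', m ≠ m' → star (v m) ⬝ᵥ v m' = 0) ∧
      ∀ m ∈ S, ∀ ψ, (M : ℝ) / (2 * d) * Complex.normSq (star (v m) ⬝ᵥ ψ) ≤ (star ψ ⬝ᵥ R m *ᵥ ψ).re := by
  have hcol := fun m => ca_col _ (hR m) (htr m)
  choose hq i hi hle using hcol
  let c : Fin M → ℝ := fun m => ∑ a, Complex.normSq (R m a (i m))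
  have hc : ∀ m, 0 < c m := fun m => lt_of_lt_of_le (mul_pos (hq m) (hi m)) (hle m)
  have hd' : (0:ℝ) < d := by exact_mod_cast hd
  have hM' : (0:ℝ) < M := by exact_mod_cast (by omega : 0 < M)
  let w : Fin M → (Fin d → ℂ) := fun m a => R m a (i m)
  let t : Fin M → ℂ := fun m => (((√(c m))⁻¹ : ℝ) : ℂ)
  have hstar : ∀ m x, star (t m • w m) ⬝ᵥ x = t m * (star (w m) ⬝ᵥ x) := by
    intro m x
    rw [star_smul, smul_dotProduct]
    simp [t]
  refine ⟨Finset.univ.filter (fun m => (caPurity (R m))⁻¹ ≤ 2 * d / M), fun m => t m • w m, ?_, ?_, ?_, ?_⟩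
  · have hs := ca_sum_inv R hR htr ho
    have h1 : ∑ m ∈ Finset.univ.filter (fun m => ¬ (caPurity (R m))⁻¹ ≤ 2 * d / M), (2 * d / M : ℝ) ≤ d := by
      refine le_trans ?_ hs
      refine le_trans ?_ (Finset.sum_le_sum_of_subset_of_nonneg (Finset.filter_subset (fun m => ¬ (caPurity (R m))⁻¹ ≤ 2 * d / M) _) (fun m _ _ => (inv_pos.2 (hq m)).le))
      apply Finset.sum_le_sum
      intro m hm
      exact (not_le.1 (Finset.mem_filter.1 hm).2).le
    have h2 := Finset.card_filter_add_card_filter_not (s := (Finset.univ : Finset (Fin M))) (fun m => (caPurity (R m))⁻¹ ≤ 2 * d / M)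
    rw [Finset.sum_const, nsmul_eq_mul] at h1
    rw [Finset.card_univ, Fintype.card_fin] at h2
    have h3 : (2:ℝ) * ((Finset.univ.filter (fun m => ¬ (caPurity (R m))⁻¹ ≤ 2 * d / M)).card : ℝ) ≤ M := by
      rw [← mul_div_assoc, div_le_iff₀ hM'] at h1
      nlinarith
    have h4 : 2 * ((Finset.univ.filter (fun m => ¬ (caPurity (R m))⁻¹ ≤ 2 * d / M)).card) ≤ M := by exact_mod_cast h3
    omega
  · intro m
    rw [hstar, dotProduct_smul]
    have : star (w m) ⬝ᵥ w m = ((c m : ℝ) : ℂ) := by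
      simp only [dotProduct, w, c, Pi.star_apply, Complex.ofReal_sum]
      exact Finset.sum_congr rfl fun a _ => by rw [Complex.normSq_eq_conj_mul_self]; rfl
    rw [this]
    simp only [t, smul_eq_mul]
    rw [← Complex.ofReal_mul, ← Complex.ofReal_mul, Complex.ofReal_re]
    have h2 := Real.sq_sqrt (hc m).le
    have h3 := Real.sqrt_pos.2 (hc m)
    nth_rw 3 [← h2]
    field_simp
  · intro m m' hne
    rw [hstar, dotProduct_smul]
    have : star (w m) ⬝ᵥ w m' = (R m * R m') (i m) (i m') := by
      simp only [dotProduct, w, mul_apply, Pi.star_apply]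
      exact Finset.sum_congr rfl fun a _ => by rw [(hR m).1.apply]
    rw [this, ho _ _ hne]; simp
  · intro m hm ψ
    have hm := (Finset.mem_filter.1 hm).2
    rw [hstar, map_mul]
    have hcs := ca_cs _ (hR m) (i m) ψ
    change Complex.normSq (star (w m) ⬝ᵥ ψ) ≤ _ at hcs
    have ht : Complex.normSq (t m) = (c m)⁻¹ := by
      simp only [t, Complex.normSq_ofReal]
      rw [← mul_inv, Real.mul_self_sqrt (hc m).le]
    rw [ht]
    have hle := hle m
    change _ ≤ c m at hle
    have hqM : (M:ℝ) / (2 * d) ≤ caPurity (R m) := by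
      rw [inv_le_comm₀ (hq m) (by positivity)] at hm
      rwa [inv_div] at hm
    have hX : 0 ≤ (star ψ ⬝ᵥ R m *ᵥ ψ).re := (Complex.le_def.1 ((hR m).dotProduct_mulVec_nonneg ψ)).1
    calc (M : ℝ) / (2 * d) * ((c m)⁻¹ * Complex.normSq (star (w m) ⬝ᵥ ψ))
        ≤ caPurity (R m) * ((c m)⁻¹ * ((R m (i m) (i m)).re * (star ψ ⬝ᵥ R m *ᵥ ψ).re)) := by
          have := (hc m).le
          have := (hq m).le
          have := Complex.normSq_nonneg (star (w m) ⬝ᵥ ψ)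
          have : 0 ≤ (c m)⁻¹ * Complex.normSq (star (w m) ⬝ᵥ ψ) := by positivity
          gcongr
      _ = (caPurity (R m) * (R m (i m) (i m)).re) * (c m)⁻¹ * (star ψ ⬝ᵥ R m *ᵥ ψ).re := by ring
      _ ≤ c m * (c m)⁻¹ * (star ψ ⬝ᵥ R m *ᵥ ψ).re := by
          have := (hc m).le
          gcongr
      _ = _ := by rw [mul_inv_cancel₀ (hc m).ne', one_mul]
/-- Kraus operators of the measure-and-broadcast channel. -/
noncomputable def caKraus {d r : ℕ} (φ : Fin r → Fin d → ℂ) (j : Fin r) :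
    Matrix (Fin r × Fin r) (Fin d) ℂ :=
  Matrix.of fun q c => if q = (j, j) then star (φ j c) else 0

lemma caKraus_apply {d r : ℕ} (φ : Fin r → Fin d → ℂ) (j : Fin r) (q : Fin r × Fin r) (c : Fin d) :
    caKraus φ j q c = if q = (j, j) then star (φ j c) else 0 := rfl

lemma ca_attack {d M r : ℕ} (hd : 1 ≤ d) {K : Type} [Fintype K] (p : K → ℝ)
    (Enc : K → Fin M → Matrix (Fin d) (Fin d) ℂ) (φ : Fin r → Fin d → ℂ)
    (hφ : ∀ a b, ∑ j, φ j a * star (φ j b) = if a = b then 1 else 0) (f : K → Fin r → Fin M) :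
    1 ≤ r ∧ ∃ (A : Fin r → Matrix (Fin r × Fin r) (Fin d) ℂ)
      (P Q : K → Fin M → Matrix (Fin r) (Fin r) ℂ),
      (∑ j, (A j)ᴴ * A j = 1) ∧
      (∀ k m, (P k m).PosSemidef) ∧ (∀ k m, (Q k m).PosSemidef) ∧
      (∀ k, ∑ m, P k m = 1) ∧ (∀ k, ∑ m, Q k m = 1) ∧
      ∑ m, ∑ k, p k * ∑ j,
          (Matrix.trace ((P k m ⊗ₖ Q k m) * (A j * Enc k m * (A j)ᴴ))).re =
        ∑ k, p k * ∑ j, (star (φ j) ⬝ᵥ Enc k (f k j) *ᵥ φ j).re := by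
  classical
  refine ⟨?_, ?_⟩
  · by_contra h
    have hr : r = 0 := by omega
    subst hr
    have := hφ ⟨0, by omega⟩ ⟨0, by omega⟩
    simp at this
  let P : K → Fin M → Matrix (Fin r) (Fin r) ℂ := fun k m => diagonal (fun j => if m = f k j then 1 else 0)
  have hP : ∀ k m, (P k m).PosSemidef := by
    intro k m
    apply PosSemidef.diagonal
    intro j
    simp only [Pi.zero_apply]
    split_ifs <;> simp
  have hPs : ∀ k, ∑ m, P k m = 1 := by
    intro k
    ext a b
    simp only [P, Matrix.sum_apply, diagonal_apply, one_apply]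
    by_cases h : a = b
    · simp [h]
    · simp [h]
  refine ⟨caKraus φ, P, P, ?_, hP, hP, hPs, hPs, ?_⟩
  · ext a b
    rw [Matrix.sum_apply, one_apply, ← hφ a b]
    refine Finset.sum_congr rfl fun j _ => ?_
    rw [mul_apply, Finset.sum_eq_single (j, j)]
    · simp [conjTranspose_apply, caKraus_apply]
    · intro q _ hq
      simp [hq, caKraus_apply]
    · simp
  · rw [Finset.sum_comm]
    refine Finset.sum_congr rfl fun k _ => ?_
    rw [← Finset.mul_sum, Finset.sum_comm]
    congr 1
    refine Finset.sum_congr rfl fun j _ => ?_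
    have key : ∀ m, (Matrix.trace ((P k m ⊗ₖ P k m) * (caKraus φ j * Enc k m * (caKraus φ j)ᴴ))).re = if m = f k j then (star (φ j) ⬝ᵥ Enc k (f k j) *ᵥ φ j).re else 0 := by
      intro m
      simp only [P, diagonal_kronecker_diagonal, Matrix.trace, Matrix.diag, diagonal_mul]
      rw [Finset.sum_eq_single (j, j)]
      · by_cases hm : m = f k j
        · subst hm
          simp only [if_true, mul_one, one_mul]
          congr 1
          rw [Matrix.mul_assoc, Matrix.mul_apply]
          simp only [dotProduct, mulVec, mul_apply, conjTranspose_apply, caKraus_apply, Pi.star_apply, if_true, star_star]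
        · simp [hm]
      · intro q _ hq
        rw [mul_apply]
        simp [hq, conjTranspose_apply, caKraus_apply]
      · simp
    simp_rw [key]
    simp

/-- the complex vector attached to a real one -/
noncomputable def caPsi {d : ℕ} (x : EuclideanSpace ℝ (Fin d ⊕ Fin d)) : Fin d → ℂ :=
  fun a => (((√2)⁻¹ : ℝ) : ℂ) * ((x (Sum.inl a) : ℂ) + (x (Sum.inr a) : ℂ) * Complex.I)

/-- the real vector attached to a complex one -/
noncomputable def caReal {d : ℕ} (v : Fin d → ℂ) : EuclideanSpace ℝ (Fin d ⊕ Fin d) :=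
  WithLp.toLp 2 (Sum.elim (fun a => (v a).re) (fun a => (v a).im))

lemma caPsi_cont {d : ℕ} : Continuous (caPsi (d := d)) := by
  unfold caPsi
  fun_prop

lemma caPsi_smul {d : ℕ} (t : ℝ) (x : EuclideanSpace ℝ (Fin d ⊕ Fin d)) :
    caPsi (t • x) = (t : ℂ) • caPsi x := by
  ext a
  simp [caPsi]; ring

lemma caReal_inner {d : ℕ} (v w : Fin d → ℂ) :
    inner ℝ (caReal v) (caReal w) = (star v ⬝ᵥ w).re := by
  simp [caReal, PiLp.inner_apply, Fintype.sum_sum_type, dotProduct, Complex.re_sum,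
    Finset.sum_add_distrib, mul_comm]

lemma caReal_psi {d : ℕ} (v : Fin d → ℂ) (x : EuclideanSpace ℝ (Fin d ⊕ Fin d)) :
    (inner ℝ (caReal v) x)^2 ≤ 2 * Complex.normSq (star v ⬝ᵥ caPsi x) := by
  have h : inner ℝ (caReal v) x = √2 * (star v ⬝ᵥ caPsi x).re := by
    simp only [caReal, caPsi, PiLp.inner_apply, Fintype.sum_sum_type, dotProduct, Complex.re_sum]
    rw [← Finset.sum_add_distrib, Finset.mul_sum]
    refine Finset.sum_congr rfl fun a _ => ?_
    have : √2 ≠ 0 := by positivity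
    simp [mul_comm]
    field_simp
    rw [Real.sq_sqrt (by norm_num)]
  rw [h, mul_pow, Real.sq_sqrt (by norm_num)]
  have : (star v ⬝ᵥ caPsi x).re^2 ≤ Complex.normSq (star v ⬝ᵥ caPsi x) := by
    rw [Complex.normSq_apply]
    nlinarith [sq_nonneg (star v ⬝ᵥ caPsi x).im]
  linarith

open MeasureTheory ProbabilityTheory in
lemma ca_second {d : ℕ} (a b : Fin d) :
    ∫ x, caPsi x a * star (caPsi x b) ∂(stdGaussian (EuclideanSpace ℝ (Fin d ⊕ Fin d)))
      = if a = b then 1 else 0 := by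
  classical
  set μ := stdGaussian (EuclideanSpace ℝ (Fin d ⊕ Fin d))
  have hx : ∀ (x : EuclideanSpace ℝ (Fin d ⊕ Fin d)) i, x i = inner ℝ (EuclideanSpace.single i (1:ℝ)) x := by
    intro x i; simp [EuclideanSpace.inner_single_left]
  have hL : ∀ i, MemLp (fun x : EuclideanSpace ℝ (Fin d ⊕ Fin d) => x i) 2 μ := by
    intro i
    simp_rw [hx]
    exact ((IsGaussian.hasGaussianLaw_id (μ := μ)).map (innerSL ℝ (EuclideanSpace.single i (1:ℝ)))).memLp_two
  have hint : ∀ i j, Integrable (fun x : EuclideanSpace ℝ (Fin d ⊕ Fin d) => ((x i * x j : ℝ) : ℂ)) μ :=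
    fun i j => ((hL i).integrable_mul (hL j)).ofReal
  have hval : ∀ i j, ∫ x, ((x i * x j : ℝ) : ℂ) ∂μ = if i = j then 1 else 0 := by
    intro i j
    refine (integral_ofReal (μ := μ) (𝕜 := ℂ) (f := fun x => x i * x j)).trans ?_
    have h := ca_cov (EuclideanSpace.single i (1:ℝ)) (EuclideanSpace.single j (1:ℝ))
    simp_rw [← hx] at h
    rw [h]
    simp [Pi.single_apply, eq_comm]
  have hexp : ∀ x : EuclideanSpace ℝ (Fin d ⊕ Fin d), caPsi x a * star (caPsi x b) =
      (1/2 : ℂ) * (((x (.inl a) * x (.inl b) : ℝ) : ℂ) + ((x (.inr a) * x (.inr b) : ℝ) : ℂ)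
        + (((x (.inr a) * x (.inl b) : ℝ) : ℂ) - ((x (.inl a) * x (.inr b) : ℝ) : ℂ)) * Complex.I) := by
    intro x
    have h2 : (((√2)⁻¹ : ℝ) : ℂ) * (((√2)⁻¹ : ℝ) : ℂ) = 1/2 := by
      rw [← Complex.ofReal_mul, ← mul_inv, Real.mul_self_sqrt (by norm_num)]; norm_num
    rw [← h2]
    simp only [caPsi, star_mul', star_add, Complex.star_def, Complex.conj_ofReal, Complex.conj_I, Complex.ofReal_mul]
    linear_combination (-(x (.inr a) * x (.inr b) * (((√2)⁻¹ : ℝ) : ℂ) * (((√2)⁻¹ : ℝ) : ℂ))) * Complex.I_sq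
  simp_rw [hexp]
  rw [integral_const_mul, integral_add, integral_add, integral_mul_const, integral_sub, hval, hval, hval, hval]
  · by_cases h : a = b
    · simp [h]; norm_num
    · simp [h]
  all_goals first
    | exact hint _ _
    | exact (hint _ _).add (hint _ _)
    | exact ((hint _ _).sub (hint _ _)).mul_const _

open MeasureTheory ProbabilityTheory in
lemma ca_main (d M : ℕ) (hd : 1 ≤ d) (hM : 2 ≤ M)
    (K : Type) [Fintype K]
    (p : K → ℝ) (hp : ∀ k, 0 ≤ p k) (hpsum : ∑ k, p k = 1)
    (Enc : K → Fin M → Matrix (Fin d) (Fin d) ℂ)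
    (hEnc : ∀ k m, (Enc k m).PosSemidef)
    (htr : ∀ k m, Matrix.trace (Enc k m) = 1)
    (horth : ∀ k (m m' : Fin M), m ≠ m' → Enc k m * Enc k m' = 0) :
    ∃ (r : ℕ) (φ : Fin r → Fin d → ℂ) (f : K → Fin r → Fin M),
      (∀ a b, ∑ j, φ j a * star (φ j b) = if a = b then 1 else 0) ∧
      (M : ℝ) / (28 * d) * Real.log ((M : ℝ) / 2) ≤
        ∑ k, p k * ∑ j, (star (φ j) ⬝ᵥ Enc k (f k j) *ᵥ φ j).re := by
  classical
  have hd' : (0:ℝ) < d := by exact_mod_cast hd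
  have hM' : (2:ℝ) ≤ M := by exact_mod_cast hM
  have : Nonempty (Fin M) := ⟨⟨0, by omega⟩⟩
  let q : K → Fin M → (EuclideanSpace ℝ (Fin d ⊕ Fin d)) → ℝ := fun k m x => (star (caPsi x) ⬝ᵥ Enc k m *ᵥ caPsi x).re
  have hqc : ∀ k m, Continuous (q k m) := by
    intro k m
    have := caPsi_cont (d := d)
    simp only [q, dotProduct, mulVec, Pi.star_apply]
    fun_prop
  have hqh : ∀ k m (t : ℝ) x, q k m (t • x) = t^2 * q k m x := by
    intro k m t x
    simp only [q, caPsi_smul, star_smul, mulVec_smul, smul_dotProduct, dotProduct_smul, smul_eq_mul]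
    rw [← mul_assoc]
    simp only [Complex.star_def, Complex.conj_ofReal, ← Complex.ofReal_mul, Complex.re_ofReal_mul, sq]
  let g : K → (EuclideanSpace ℝ (Fin d ⊕ Fin d)) → ℝ := fun k x => ⨆ m, q k m x
  have hgc : ∀ k, Continuous (g k) := by
    intro k
    have : g k = fun x => Finset.univ.sup' Finset.univ_nonempty (fun m => q k m x) := by
      funext x
      simp only [g]
      rw [Finset.sup'_univ_eq_ciSup]
    rw [this]
    exact Continuous.finset_sup'_apply _ (fun m _ => hqc k m)
  have hgh : ∀ k (t : ℝ) x, g k (t • x) = t^2 • g k x := by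
    intro k t x
    simp only [g, hqh, smul_eq_mul]
    rw [Real.mul_iSup_of_nonneg (sq_nonneg t)]
  have hgi : ∀ k, Integrable (g k) (stdGaussian (EuclideanSpace ℝ (Fin d ⊕ Fin d))) := fun k => ca_integrable (g k) (hgc k) (fun t x _ => hgh k t x)
  have hlow : ∀ k, (M : ℝ) / (28 * d) * Real.log ((M : ℝ) / 2) ≤ ∫ x, g k x ∂(stdGaussian (EuclideanSpace ℝ (Fin d ⊕ Fin d))) := by
    intro k
    obtain ⟨S, v, hS, hv1, hv2, hv3⟩ := ca_select hd hM (Enc k) (hEnc k) (htr k) (horth k)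
    have hSpos : 0 < S.card := by omega
    have : Nonempty S := (Finset.card_pos.1 hSpos).to_subtype
    have hon : Orthonormal ℝ (fun m : S => caReal (v m)) := by
      constructor
      · intro m
        have h := caReal_inner (v m) (v m)
        rw [hv1, real_inner_self_eq_norm_sq] at h
        have h0 := norm_nonneg (caReal (v m))
        nlinarith
      · intro m m' hne
        rw [caReal_inner, hv2 _ _ (fun h => hne (Subtype.ext h))]
        simp
    have h := ca_gauss_max _ hon (fun x => (4 * d / M) * g k x) ((hgi k).const_mul _) (by
      intro m x
      have h1 := caReal_psi (v m) x
      have h2 := hv3 m m.2 (caPsi x)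
      have h3 : q k m x ≤ g k x := le_ciSup (f := fun m => q k m x) (Set.finite_range _).bddAbove (m : Fin M)
      change _ ≤ q k m x at h2
      have h4 : (4 * d / M : ℝ) * ((M:ℝ) / (2 * d) * Complex.normSq (star (v m) ⬝ᵥ caPsi x)) ≤ (4 * d / M : ℝ) * g k x := by
        have := h2.trans h3
        gcongr
      have h5 : (4 * d / M : ℝ) * ((M:ℝ) / (2 * d) * Complex.normSq (star (v m) ⬝ᵥ caPsi x)) = 2 * Complex.normSq (star (v m) ⬝ᵥ caPsi x) := by
        field_simp; ring
      linarith)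
    rw [integral_const_mul, Fintype.card_coe] at h
    have hlog : Real.log ((M:ℝ)/2) ≤ Real.log S.card := by
      apply Real.log_le_log (by positivity)
      have : (M:ℝ) ≤ 2 * S.card := by exact_mod_cast hS
      linarith
    have h6 : (M:ℝ) / (4 * d) * ((1/7) * Real.log ((M:ℝ)/2)) ≤ (M:ℝ) / (4 * d) * (4 * d / M * ∫ x, g k x ∂(stdGaussian (EuclideanSpace ℝ (Fin d ⊕ Fin d)))) := by
      apply mul_le_mul_of_nonneg_left _ (by positivity)
      linarith
    calc (M : ℝ) / (28 * d) * Real.log ((M : ℝ) / 2) = (M:ℝ) / (4 * d) * ((1/7) * Real.log ((M:ℝ)/2)) := by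
          field_simp; ring
      _ ≤ _ := h6
      _ = _ := by field_simp
  let F : (EuclideanSpace ℝ (Fin d ⊕ Fin d)) → (Fin d → Fin d → ℂ) × ℝ := fun x => (fun a b => caPsi x a * star (caPsi x b), ∑ k, p k * g k x)
  have hFc : Continuous F := by
    have := caPsi_cont (d := d)
    simp only [F]
    fun_prop
  have hFh : ∀ (t : ℝ) x, 0 ≤ t → F (t • x) = t^2 • F x := by
    intro t x _
    ext1
    · ext a b
      simp only [F, caPsi_smul]
      simp
      ring
    · simp only [F, hgh, Prod.smul_snd, smul_eq_mul, Finset.mul_sum]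
      exact Finset.sum_congr rfl fun k _ => by ring
  have hFi := ca_integrable F hFc hFh
  obtain ⟨r, x, hx⟩ := ca_frame F hFc hFh (by simp; omega)
  have hmax : ∀ k j, ∃ m, q k m (x j) = g k (x j) := fun k j => exists_eq_ciSup_of_finite
  choose f hf using hmax
  refine ⟨r, fun j => caPsi (x j), f, ?_, ?_⟩
  · intro a b
    let ℓ : ((Fin d → Fin d → ℂ) × ℝ) →L[ℝ] ℂ :=
      (ContinuousLinearMap.proj (R := ℝ) (φ := fun _ : Fin d => ℂ) b).comp
        ((ContinuousLinearMap.proj (R := ℝ) (φ := fun _ : Fin d => Fin d → ℂ) a).comp (ContinuousLinearMap.fst ℝ _ _))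
    have h := congrArg ℓ hx
    rw [← ℓ.integral_comp_comm hFi, map_sum] at h
    rw [← ca_second a b]
    exact h
  · let ℓ : ((Fin d → Fin d → ℂ) × ℝ) →L[ℝ] ℝ := ContinuousLinearMap.snd ℝ _ _
    have h := congrArg ℓ hx
    rw [← ℓ.integral_comp_comm hFi, map_sum] at h
    change ∑ j, ∑ k, p k * g k (x j) = ∫ y, ∑ k, p k * g k y ∂(stdGaussian (EuclideanSpace ℝ (Fin d ⊕ Fin d))) at h
    rw [integral_finsetSum _ (fun k _ => (hgi k).const_mul _)] at h
    simp_rw [integral_const_mul] at h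
    calc (M : ℝ) / (28 * d) * Real.log ((M : ℝ) / 2)
        = ∑ k, p k * ((M : ℝ) / (28 * d) * Real.log ((M : ℝ) / 2)) := by
          rw [← Finset.sum_mul, hpsum, one_mul]
      _ ≤ ∑ k, p k * ∫ x, g k x ∂(stdGaussian (EuclideanSpace ℝ (Fin d ⊕ Fin d))) :=
          Finset.sum_le_sum fun k _ => mul_le_mul_of_nonneg_left (hlow k) (hp k)
      _ = ∑ j, ∑ k, p k * g k (x j) := h.symm
      _ = ∑ k, p k * ∑ j, g k (x j) := by
          rw [Finset.sum_comm]
          simp_rw [Finset.mul_sum]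
      _ = _ := by
          simp_rw [← hf]
          rfl

/-- Theorem 2 of the paper: every correct QECM scheme with `M` messages (even `M ≥ 2`)
and `d`-dimensional ciphertexts admits a cloning attack winning with probability at least
`((1/2 − e⁻¹)/4)·ln(M/2)/d − ε` for every `ε > 0`; i.e. the optimal winning probability
for uniformly distributed messages is at least `c·(log₂ M − 1)/d` with `c > 0.02285`. -/
theorem cloning_attack_uniform_lower_bound (d M : ℕ) (hd : 1 ≤ d) (hM : 2 ≤ M)
    (hMeven : Even M)
    (K : Type) [Fintype K] [Nonempty K]
    (p : K → ℝ) (hp : ∀ k, 0 ≤ p k) (hpsum : ∑ k, p k = 1)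
    (Enc : K → Fin M → Matrix (Fin d) (Fin d) ℂ)
    (hEnc : ∀ k m, (Enc k m).PosSemidef)
    (htr : ∀ k m, Matrix.trace (Enc k m) = 1)
    (horth : ∀ k (m m' : Fin M), m ≠ m' → Enc k m * Enc k m' = 0)
    (ε : ℝ) (hε : 0 < ε) :
    ∃ (n : ℕ), 1 ≤ n ∧
    ∃ (r : ℕ) (A : Fin r → Matrix (Fin n × Fin n) (Fin d) ℂ)
      (P Q : K → Fin M → Matrix (Fin n) (Fin n) ℂ),
      (∑ j, (A j)ᴴ * A j = 1) ∧
      (∀ k m, (P k m).PosSemidef) ∧ (∀ k m, (Q k m).PosSemidef) ∧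
      (∀ k, ∑ m, P k m = 1) ∧ (∀ k, ∑ m, Q k m = 1) ∧
      (1 / (M : ℝ)) * ∑ m, ∑ k, p k * ∑ j,
          (Matrix.trace ((P k m ⊗ₖ Q k m) * (A j * Enc k m * (A j)ᴴ))).re ≥
        ((1 / 2 - Real.exp (-1)) / 4) * Real.log ((M : ℝ) / 2) / (d : ℝ) - ε := by
  obtain ⟨r, φ, f, h1, h2⟩ := ca_main d M hd hM K p hp hpsum Enc hEnc htr horth
  obtain ⟨hr, A, P, Q, hA, hP, hQ, hPs, hQs, hw⟩ := ca_attack hd p Enc φ h1 f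
  refine ⟨r, hr, r, A, P, Q, hA, hP, hQ, hPs, hQs, ?_⟩
  rw [hw]
  have hd' : (0:ℝ) < d := by exact_mod_cast hd
  have hM' : (2:ℝ) ≤ M := by exact_mod_cast hM
  have hlog : 0 ≤ Real.log ((M:ℝ)/2) := Real.log_nonneg (by linarith)
  have he : (1 / 2 - Real.exp (-1)) / 4 ≤ 1 / 28 := by
    have := Real.exp_neg_one_gt_d9
    linarith
  have h3 : ((1 / 2 - Real.exp (-1)) / 4) * Real.log ((M : ℝ) / 2) / (d : ℝ) ≤
      1 / 28 * Real.log ((M : ℝ) / 2) / (d : ℝ) := by gcongr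
  have h4 : 1 / (M:ℝ) * ((M : ℝ) / (28 * d) * Real.log ((M : ℝ) / 2)) ≤
      1 / (M:ℝ) * ∑ k, p k * ∑ j, (star (φ j) ⬝ᵥ Enc k (f k j) *ᵥ φ j).re := by gcongr
  have h5 : 1 / (M:ℝ) * ((M : ℝ) / (28 * d) * Real.log ((M : ℝ) / 2)) =
      1 / 28 * Real.log ((M : ℝ) / 2) / (d : ℝ) := by field_simp
  linarith
end
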